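/- Let α, β ≥ -1/2 and T > 0. Starting from the representation ℋ_t^{(α,β)}(θ,φ) = c_{α,β} sinh(t/2) ∬ (cosh(t/2) - 1 + q(θ,φ,u,v))^{-(α+β+2)} dΠ_α(u)dΠ_β(v) with q(θ,φ,u,v) = 1 - u sin(θ/2)sin(φ/2) - v cos(θ/2)cos(φ/2), one has, uniformly in θ, φ ∈ [0,π] and 0 < t ≤ T: ℋ_t^{(α,β)}(θ,φ) ≃ (t² + θ² + φ²)^{-α-1/2} (t² + (π-θ)² + (π-φ)²)^{-β-1/2} · t/(t² + (θ-φ)²). -/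

import Mathlib

open Real MeasureTheory

/-- The measure Π_ν on [-1,1]: density (Γ(ν+1)/(√π Γ(ν+1/2)))(1-s²)^{ν-1/2} for ν > -1/2,
and (δ_{-1}+δ_1)/2 for ν = -1/2. -/
noncomputable def jacobiPi (ν : ℝ) : Measure ℝ :=
  if ν = -1/2 then
    (1/2 : ENNReal) • (Measure.dirac (-1) + Measure.dirac 1)
  else
    (volume.restrict (Set.Icc (-1 : ℝ) 1)).withDensity
      (fun s => ENNReal.ofReal
        (Real.Gamma (ν + 1) / (Real.sqrt π * Real.Gamma (ν + 1/2)) * (1 - s ^ 2) ^ (ν - 1/2)))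

/-- Total mass μ_{a,b}(0,π) of the measure (sin(θ/2))^{2a+1}(cos(θ/2))^{2b+1} dθ. -/
noncomputable def muab (a b : ℝ) : ℝ :=
  ∫ θ in Set.Icc (0 : ℝ) π, (Real.sin (θ/2)) ^ (2 * a + 1) * (Real.cos (θ/2)) ^ (2 * b + 1)

/-- The constant c_{α,β} = 2^{-α-β-1}/μ_{α,β}(0,π). -/
noncomputable def cab (a b : ℝ) : ℝ := (2 : ℝ) ^ (-a - b - 1) / muab a b

/-- q(θ,φ,u,v) = 1 - u sin(θ/2)sin(φ/2) - v cos(θ/2)cos(φ/2). -/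
noncomputable def qfun (θ φ u v : ℝ) : ℝ :=
  1 - u * Real.sin (θ/2) * Real.sin (φ/2) - v * Real.cos (θ/2) * Real.cos (φ/2)

/-- The Poisson–Jacobi kernel ℋ_t^{(α,β)}, via its integral representation. -/
noncomputable def poissonJacobi (a b : ℝ) (t θ φ : ℝ) : ℝ :=
  cab a b * Real.sinh (t/2) *
    ∫ u, (∫ v, (Real.cosh (t/2) - 1 + qfun θ φ u v) ^ (-(a + b + 2)) ∂(jacobiPi b))
      ∂(jacobiPi a)

/-!
Write `z = cosh (t / 2)`, `p = α + 1 / 2`, `q = β + 1 / 2`, `S = sin (θ / 2) sin (φ / 2)` and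
`Q = cos (θ / 2) cos (φ / 2)`. Up to the factor `sinh (t / 2) ≃ t`, the kernel is the double
integral of `(z - S u - Q v) ^ (-(p + q + 1))` against `Π_α` and `Π_β`. The only property of `Π_ν`
that matters is that `[1 - r, 1]` has mass comparable with `r ^ (ν + 1 / 2)`. For a measure with
this property (exponent `p`) the layer cake formula, from above, and Markov's inequality, from
below, give `∫ (D - B s) ^ (-κ) (A - B s) ^ (-γ) ≃ (D - B) ^ (-κ) A ^ (-p) (A - B) ^ (-(γ - p))`.
Integrating first in `v` and then in `u`, the double integral is comparable with
`(z - S) ^ (-q) (z - Q) ^ (-p) (z - S - Q)⁻¹`.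

The three differences are all of the form `cosh (t / 2) - cos (x / 2) cos (y / 2)`, which equals
`2 sinh² (t / 4) + sin² ((x + y) / 4) + sin² ((x - y) / 4)` and hence is comparable with
`t² + x² + y²`: take `(x, y)` to be `(π - θ, π - φ)`, `(θ, φ)` and `(θ - φ, 0)`.

Uniform comparability is expressed by `=Θ[l]` along an arbitrary filter `l`; for a principal filter
this is comparability on a set with constants depending only on the set.
-/

open Asymptotics Filter Set
open scoped Topology

section Comparability

variable {ι : Type*} {l : Filter ι}

theorem isTheta_principal_iff_of_nonneg {s : Set ι} {f g : ι → ℝ} (hf : ∀ i ∈ s, 0 ≤ f i)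
    (hg : ∀ i ∈ s, 0 ≤ g i) :
    f =Θ[𝓟 s] g ↔
      ∃ c C : ℝ, 0 < c ∧ 0 < C ∧ ∀ i ∈ s, c * g i ≤ f i ∧ f i ≤ C * g i := by
  constructor
  · rintro ⟨hfg, hgf⟩
    obtain ⟨C, hC, hfg⟩ := hfg.exists_pos
    obtain ⟨c, hc, hgf⟩ := hgf.exists_pos
    rw [IsBigOWith_def, eventually_principal] at hfg hgf
    refine ⟨c⁻¹, C, inv_pos.2 hc, hC, fun i hi ↦ ⟨?_, ?_⟩⟩
    · have := hgf i hi
      rwa [Real.norm_of_nonneg (hf i hi), Real.norm_of_nonneg (hg i hi),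
        ← inv_mul_le_iff₀ hc] at this
    · have := hfg i hi
      rwa [Real.norm_of_nonneg (hf i hi), Real.norm_of_nonneg (hg i hi)] at this
  · rintro ⟨c, C, hc, -, h⟩
    refine ⟨isBigO_principal.2 ⟨C, fun i hi ↦ ?_⟩, isBigO_principal.2 ⟨c⁻¹, fun i hi ↦ ?_⟩⟩
    · rw [Real.norm_of_nonneg (hf i hi), Real.norm_of_nonneg (hg i hi)]
      exact (h i hi).2
    · rw [Real.norm_of_nonneg (hf i hi), Real.norm_of_nonneg (hg i hi), le_inv_mul_iff₀ hc]
      exact (h i hi).1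

theorem isTheta_comp_tendsto {ι' E F : Type*} [Norm E] [Norm F] {l' : Filter ι'} {f : ι → E}
    {g : ι → F} (h : f =Θ[l] g) {k : ι' → ι} (hk : Tendsto k l' l) : (f ∘ k) =Θ[l'] (g ∘ k) :=
  ⟨h.1.comp_tendsto hk, h.2.comp_tendsto hk⟩

theorem isTheta_add_of_nonneg {f₁ f₂ g₁ g₂ : ι → ℝ} (hf₁ : 0 ≤ᶠ[l] f₁) (hf₂ : 0 ≤ᶠ[l] f₂)
    (hg₁ : 0 ≤ᶠ[l] g₁) (hg₂ : 0 ≤ᶠ[l] g₂) (h₁ : f₁ =Θ[l] g₁) (h₂ : f₂ =Θ[l] g₂) :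
    (fun i ↦ f₁ i + f₂ i) =Θ[l] fun i ↦ g₁ i + g₂ i := by
  constructor
  · refine (h₁.isBigO.add_add h₂.isBigO).trans_eventuallyEq ?_
    filter_upwards [hg₁, hg₂] with i h₁ h₂
    rw [Real.norm_of_nonneg h₁, Real.norm_of_nonneg h₂]
  · refine (h₁.isBigO_symm.add_add h₂.isBigO_symm).trans_eventuallyEq ?_
    filter_upwards [hf₁, hf₂] with i h₁ h₂
    rw [Real.norm_of_nonneg h₁, Real.norm_of_nonneg h₂]

theorem isTheta_sub_of_simple_zero {𝕜 : Type*} [NontriviallyNormedField 𝕜] {f : 𝕜 → 𝕜} {a : 𝕜}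
    {K : Set 𝕜} (hK : IsCompact K) (hf : Differentiable 𝕜 f) (ha : f a = 0)
    (ha' : deriv f a ≠ 0) (hne : ∀ x ∈ K, x ≠ a → f x ≠ 0) :
    f =Θ[𝓟 K] fun x ↦ x - a := by
  have hfactor : ∀ x, (x - a) * dslope f a x = f x := fun x ↦ by
    rw [← smul_eq_mul, sub_smul_dslope, ha, sub_zero]
  have hcont : Continuous (dslope f a) := continuous_iff_continuousAt.2 fun x ↦ by
    rcases eq_or_ne x a with rfl | hx
    · exact continuousAt_dslope_same.2 (hf x)
    · exact (continuousAt_dslope_of_ne hx).2 (hf x).continuousAt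
  have hdslope : ∀ x ∈ K, dslope f a x ≠ 0 := fun x hx ↦ by
    rcases eq_or_ne x a with rfl | hxa
    · rwa [dslope_same]
    · exact right_ne_zero_of_mul (hfactor x ▸ hne x hx hxa)
  have hΘ : dslope f a =Θ[𝓟 K] fun _ ↦ (1 : 𝕜) :=
    hcont.continuousOn.isTheta_principal hK (norm_ne_zero_iff.2 one_ne_zero) hdslope
  simpa only [hfactor, mul_one] using (isTheta_refl (fun x ↦ x - a) (𝓟 K)).mul hΘ

variable {α : Type*} [MeasurableSpace α] {μ : ι → Measure α} {K : Set α}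

theorem isTheta_integral {f g : ι → α → ℝ} (hμ : ∀ᶠ i in l, ∀ᵐ a ∂μ i, a ∈ K)
    (hf₀ : ∀ᶠ i in l, ∀ a ∈ K, 0 ≤ f i a) (hg₀ : ∀ᶠ i in l, ∀ a ∈ K, 0 ≤ g i a)
    (hf : ∀ᶠ i in l, AEStronglyMeasurable (f i) (μ i)) (hg : ∀ᶠ i in l, Integrable (g i) (μ i))
    (hfg : (fun x : ι × α ↦ f x.1 x.2) =Θ[l ×ˢ 𝓟 K] fun x ↦ g x.1 x.2) :
    (fun i ↦ ∫ a, f i a ∂μ i) =Θ[l] fun i ↦ ∫ a, g i a ∂μ i := by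
  obtain ⟨C, hC⟩ := hfg.isBigO.bound
  obtain ⟨c, hc⟩ := hfg.isBigO_symm.bound
  rw [eventually_prod_principal_iff] at hC hc
  constructor
  · refine .of_bound C ?_
    filter_upwards [hμ, hg₀, hg, hC] with i hμ hg₀ hg hC
    rw [Real.norm_of_nonneg (integral_nonneg_of_ae (hμ.mono hg₀)), ← integral_const_mul]
    refine norm_integral_le_of_norm_le (hg.const_mul C) ?_
    filter_upwards [hμ] with a ha
    simpa only [Real.norm_of_nonneg (hg₀ a ha)] using hC a ha
  · refine .of_bound c ?_
    filter_upwards [hμ, hf₀, hf, hg, hC, hc] with i hμ hf₀ hf hg hC hc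
    have hfint : Integrable (f i) (μ i) := (hg.norm.const_mul C).mono' hf (hμ.mono hC)
    rw [Real.norm_of_nonneg (integral_nonneg_of_ae (hμ.mono hf₀)), ← integral_const_mul]
    refine norm_integral_le_of_norm_le (hfint.const_mul c) ?_
    filter_upwards [hμ] with a ha
    simpa only [Real.norm_of_nonneg (hf₀ a ha)] using hc a ha

end Comparability

theorem setIntegral_Ioc_rpow {r : ℝ} (hr : -1 < r) {M : ℝ} (hM : 0 ≤ M) :
    ∫ t in Ioc 0 M, t ^ r = M ^ (r + 1) / (r + 1) := by
  rw [← intervalIntegral.integral_of_le hM, integral_rpow (Or.inl hr),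
    zero_rpow (by linarith), sub_zero]

theorem integral_rpow_neg_le_of_measureReal_le {α : Type*} [MeasurableSpace α] {μ : Measure α}
    [IsFiniteMeasure μ] {g : α → ℝ} {m C p γ : ℝ} (hg : AEMeasurable g μ) (hm : 0 < m)
    (hmg : ∀ᵐ a ∂μ, m ≤ g a) (hC : ∀ r, 0 < r → μ.real {a | g a ≤ r} ≤ C * r ^ p)
    (hγ : 0 < γ) (hpγ : p < γ) :
    ∫ a, g a ^ (-γ) ∂μ ≤ C * γ / (γ - p) * m ^ (-(γ - p)) := by
  have hbound : ∀ᵐ a ∂μ, g a ^ (-γ) ≤ m ^ (-γ) := by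
    filter_upwards [hmg] with a ha
    exact rpow_le_rpow_of_nonpos hm ha (neg_nonpos.2 hγ.le)
  have hnonneg : ∀ᵐ a ∂μ, 0 ≤ g a ^ (-γ) := by
    filter_upwards [hmg] with a ha
    exact rpow_nonneg (hm.le.trans ha) _
  have hint : Integrable (fun a ↦ g a ^ (-γ)) μ := by
    refine .of_bound (hg.pow_const _).aestronglyMeasurable (m ^ (-γ)) ?_
    filter_upwards [hbound, hnonneg] with a hbound hnonneg
    rwa [Real.norm_of_nonneg hnonneg]
  have hexp : -1 < -(p / γ) := by rwa [neg_lt_neg_iff, div_lt_one hγ]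
  have htail : ∀ t ∈ Ioc 0 (m ^ (-γ)), μ.real {a | t ≤ g a ^ (-γ)} ≤ C * t ^ (-(p / γ)) := by
    intro t ht
    calc μ.real {a | t ≤ g a ^ (-γ)} ≤ μ.real {a | g a ≤ t ^ (-γ)⁻¹} := by
          refine ENNReal.toReal_mono (measure_ne_top _ _) (measure_mono_ae ?_)
          filter_upwards [hmg] with a ha hta
          exact (le_rpow_inv_iff_of_neg (hm.trans_le ha) ht.1 (neg_lt_zero.2 hγ)).2 hta
      _ ≤ C * (t ^ (-γ)⁻¹) ^ p := hC _ (rpow_pos_of_pos ht.1 _)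
      _ = C * t ^ (-(p / γ)) := by
          rw [← rpow_mul ht.1.le]
          congr 2
          field_simp
  calc ∫ a, g a ^ (-γ) ∂μ = ∫ t in Ioc 0 (m ^ (-γ)), μ.real {a | t ≤ g a ^ (-γ)} :=
        hint.integral_eq_integral_Ioc_meas_le hnonneg hbound
    _ ≤ ∫ t in Ioc 0 (m ^ (-γ)), C * t ^ (-(p / γ)) := by
        refine integral_mono_of_nonneg (.of_forall fun _ ↦ measureReal_nonneg)
          ((intervalIntegral.intervalIntegrable_rpow' hexp).1.const_mul C) ?_
        filter_upwards [ae_restrict_mem measurableSet_Ioc] with t ht using htail t ht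
    _ = C * γ / (γ - p) * m ^ (-(γ - p)) := by
        have hsub : γ - p ≠ 0 := (sub_pos.2 hpγ).ne'
        rw [integral_const_mul, setIntegral_Ioc_rpow hexp (rpow_nonneg hm.le _),
          ← rpow_mul hm.le]
        have hmul : -γ * (-(p / γ) + 1) = -(γ - p) := by field_simp; ring
        have hdiv : -(p / γ) + 1 = (γ - p) / γ := by field_simp; ring
        rw [hmul, hdiv]
        field_simp

/-- A finite measure on `[-1, 1]` whose mass near the endpoint `1` grows like a power: the mass of
`[1 - r, 1]` is comparable with `r ^ p` for `0 < r ≤ 1`. This is all that the kernel estimates use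
of `Π_ν`, for which `p = ν + 1/2`. -/
structure HasTailGrowth (μ : Measure ℝ) (p : ℝ) : Prop extends IsFiniteMeasure μ where
  ae_mem : ∀ᵐ s ∂μ, s ∈ Icc (-1) 1
  isTheta : (fun r ↦ μ.real (Ici (1 - r))) =Θ[𝓟 (Ioc 0 1)] fun r ↦ r ^ p

theorem mul_one_sub_le_two_mul {A B s : ℝ} (hB : 0 ≤ B) (hBA : B ≤ A)
    (hs : s ∈ Icc (-1) 1) : A * (1 - s) ≤ 2 * (A - B * s) := by
  linarith [mul_nonneg (sub_nonneg.2 hBA) (neg_le_iff_add_nonneg'.1 hs.1),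
    mul_nonneg hB (sub_nonneg.2 hs.2)]

namespace HasTailGrowth

variable {μ ν : Measure ℝ} {p q : ℝ}

theorem exponent_nonneg (h : HasTailGrowth μ p) : 0 ≤ p := by
  have := h.toIsFiniteMeasure
  by_contra! hp
  obtain ⟨C, hC⟩ := isBigO_principal.1 h.isTheta.isBigO_symm
  have hlarge : ∀ᶠ r : ℝ in 𝓝[>] 0, C * μ.real univ < r ^ p :=
    (tendsto_rpow_neg_nhdsGT_zero hp).eventually_gt_atTop _
  obtain ⟨r, hr, hr₀⟩ := (hlarge.and (Ioc_mem_nhdsGT one_pos)).exists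
  have hle := hC r hr₀
  rw [Real.norm_of_nonneg (rpow_nonneg hr₀.1.le _), Real.norm_of_nonneg measureReal_nonneg] at hle
  have hC₀ : 0 ≤ C := by
    by_contra! hC₀
    exact (rpow_pos_of_pos hr₀.1 p).not_ge
      (hle.trans (mul_nonpos_of_nonpos_of_nonneg hC₀.le measureReal_nonneg))
  exact hr.not_ge (hle.trans (mul_le_mul_of_nonneg_left (measureReal_mono (subset_univ _)) hC₀))

theorem measureReal_Ici_le (h : HasTailGrowth μ p) :
    ∃ C : ℝ, ∀ r, 0 < r → μ.real (Ici (1 - r)) ≤ C * r ^ p := by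
  have := h.toIsFiniteMeasure
  obtain ⟨C, hC⟩ := isBigO_principal.1 h.isTheta.isBigO
  refine ⟨max C (μ.real univ), fun r hr ↦ ?_⟩
  rcases le_or_gt r 1 with hr₁ | hr₁
  · calc μ.real (Ici (1 - r)) ≤ C * r ^ p := by
          simpa only [Real.norm_of_nonneg measureReal_nonneg,
            Real.norm_of_nonneg (rpow_nonneg hr.le _)] using hC r ⟨hr, hr₁⟩
      _ ≤ _ := by gcongr; exact le_max_left _ _
  · calc μ.real (Ici (1 - r)) ≤ μ.real univ * 1 := by
          rw [mul_one]; exact measureReal_mono (subset_univ _)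
      _ ≤ _ := by gcongr; exacts [le_max_right _ _, one_le_rpow hr₁.le h.exponent_nonneg]

theorem integrable_of_continuousOn (h : HasTailGrowth μ p) {f : ℝ → ℝ}
    (hf : ContinuousOn f (Icc (-1) 1)) : Integrable f μ := by
  have := h.toIsFiniteMeasure
  rw [← Measure.restrict_eq_self_of_ae_mem h.ae_mem]
  exact hf.integrableOn_compact isCompact_Icc

theorem exists_integral_sub_mul_rpow_le (h : HasTailGrowth μ p) {γ : ℝ} (hγ : p < γ) :
    ∃ C : ℝ, ∀ A B, 0 ≤ B → B < A →
      ∫ s, (A - B * s) ^ (-γ) ∂μ ≤ C * (A ^ (-p) * (A - B) ^ (-(γ - p))) := by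
  have := h.toIsFiniteMeasure
  obtain ⟨C, hC⟩ := h.measureReal_Ici_le
  refine ⟨C * 2 ^ p * γ / (γ - p), fun A B hB hBA ↦ ?_⟩
  have hA : 0 < A := hB.trans_lt hBA
  have htail : ∀ r, 0 < r → μ.real {s | A - B * s ≤ r} ≤ C * (2 / A) ^ p * r ^ p := by
    intro r hr
    calc μ.real {s | A - B * s ≤ r} ≤ μ.real (Ici (1 - 2 / A * r)) := by
          refine ENNReal.toReal_mono (measure_ne_top _ _) (measure_mono_ae ?_)
          filter_upwards [h.ae_mem] with s hs hsr
          have hle : 1 - s ≤ 2 / A * r := by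
            rw [div_mul_eq_mul_div, le_div_iff₀ hA, mul_comm]
            linarith [mul_one_sub_le_two_mul hB hBA.le hs, show A - B * s ≤ r from hsr]
          exact sub_le_comm.1 hle
      _ ≤ C * (2 / A * r) ^ p := hC _ (by positivity)
      _ = C * (2 / A) ^ p * r ^ p := by rw [mul_rpow (by positivity) hr.le, mul_assoc]
  have hmin : ∀ᵐ s ∂μ, A - B ≤ A - B * s := by
    filter_upwards [h.ae_mem] with s hs using sub_le_sub_left (mul_le_of_le_one_right hB hs.2) _
  calc ∫ s, (A - B * s) ^ (-γ) ∂μ ≤ C * (2 / A) ^ p * γ / (γ - p) * (A - B) ^ (-(γ - p)) :=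
        integral_rpow_neg_le_of_measureReal_le (by fun_prop) (sub_pos.2 hBA) hmin htail
          (h.exponent_nonneg.trans_lt hγ) hγ
    _ = _ := by rw [div_rpow zero_le_two hA.le, rpow_neg hA.le]; ring

theorem mul_measureReal_Ici_le_integral (h : HasTailGrowth μ p) {A B D κ γ : ℝ} (hκ : 0 ≤ κ)
    (hγ : 0 ≤ γ) (hB : 0 ≤ B) (hBA : B < A) (hAD : A ≤ D) :
    (2 * (D - B)) ^ (-κ) * (2 * (A - B)) ^ (-γ) * μ.real (Ici (1 - (A - B) / A)) ≤
      ∫ s, (D - B * s) ^ (-κ) * (A - B * s) ^ (-γ) ∂μ := by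
  have := h.toIsFiniteMeasure
  have hA : 0 < A := hB.trans_lt hBA
  have hmul : ∀ s ∈ Icc (-1 : ℝ) 1, B * s ≤ B := fun s hs ↦ mul_le_of_le_one_right hB hs.2
  set f : ℝ → ℝ := fun s ↦ (D - B * s) ^ (-κ) * (A - B * s) ^ (-γ)
  have hf₀ : 0 ≤ᵐ[μ] f := by
    filter_upwards [h.ae_mem] with s hs
    exact mul_nonneg (rpow_nonneg (by linarith [hmul s hs]) _)
      (rpow_nonneg (by linarith [hmul s hs]) _)
  have hint : Integrable f μ := h.integrable_of_continuousOn <| by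
    refine ContinuousOn.mul ?_ ?_ <;> refine ContinuousOn.rpow_const (by fun_prop) fun s hs ↦ ?_
    all_goals exact Or.inl (by linarith [hmul s hs])
  set M : ℝ := (2 * (D - B)) ^ (-κ) * (2 * (A - B)) ^ (-γ)
  have hM : 0 ≤ M := mul_nonneg (rpow_nonneg (by linarith) _) (rpow_nonneg (by linarith) _)
  -- For `1 - s ≤ (A - B) / A` both bases are at most twice their minimal values, attained at `1`.
  have hlevel : ∀ᵐ s ∂μ, s ∈ Ici (1 - (A - B) / A) → M ≤ f s := by
    filter_upwards [h.ae_mem] with s hs hsr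
    have hBr : B * (1 - s) ≤ A - B :=
      calc B * (1 - s) ≤ A * ((A - B) / A) :=
            mul_le_mul hBA.le (sub_le_comm.1 hsr) (sub_nonneg.2 hs.2) hA.le
        _ = A - B := mul_div_cancel₀ _ hA.ne'
    refine mul_le_mul ?_ ?_ (rpow_nonneg (by linarith) _) (rpow_nonneg (by linarith [hmul s hs]) _)
    · exact rpow_le_rpow_of_nonpos (by linarith [hmul s hs]) (by linarith) (neg_nonpos.2 hκ)
    · exact rpow_le_rpow_of_nonpos (by linarith [hmul s hs]) (by linarith) (neg_nonpos.2 hγ)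
  calc M * μ.real (Ici (1 - (A - B) / A)) ≤ M * μ.real {s | M ≤ f s} :=
        mul_le_mul_of_nonneg_left
          (ENNReal.toReal_mono (measure_ne_top _ _) (measure_mono_ae hlevel)) hM
    _ ≤ ∫ s, f s ∂μ := mul_meas_ge_le_integral_of_nonneg hf₀ hint M

variable {ι : Type*} {l : Filter ι} {A B D : ι → ℝ} {κ γ : ℝ}

theorem isBigO_integral_rpow_mul_rpow (h : HasTailGrowth μ p) (hκ : 0 ≤ κ) (hγ : p < γ)
    (hB : ∀ᶠ i in l, 0 ≤ B i) (hBA : ∀ᶠ i in l, B i < A i) (hAD : ∀ᶠ i in l, A i ≤ D i) :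
    (fun i ↦ ∫ s, (D i - B i * s) ^ (-κ) * (A i - B i * s) ^ (-γ) ∂μ) =O[l]
      fun i ↦ (D i - B i) ^ (-κ) * A i ^ (-p) * (A i - B i) ^ (-(γ - p)) := by
  obtain ⟨C, hC⟩ := h.exists_integral_sub_mul_rpow_le hγ
  refine .of_bound C ?_
  filter_upwards [hB, hBA, hAD] with i hB hBA hAD
  have hA : 0 < A i := hB.trans_lt hBA
  have hBD : 0 < D i - B i := by linarith
  have hmul : ∀ s ∈ Icc (-1 : ℝ) 1, B i * s ≤ B i := fun s hs ↦ mul_le_of_le_one_right hB hs.2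
  have hint : Integrable (fun s ↦ (A i - B i * s) ^ (-γ)) μ :=
    h.integrable_of_continuousOn <| ContinuousOn.rpow_const (by fun_prop)
      fun s hs ↦ Or.inl (by linarith [hmul s hs])
  calc ‖∫ s, (D i - B i * s) ^ (-κ) * (A i - B i * s) ^ (-γ) ∂μ‖
      ≤ ∫ s, (D i - B i) ^ (-κ) * (A i - B i * s) ^ (-γ) ∂μ := by
        refine norm_integral_le_of_norm_le (hint.const_mul _) ?_
        filter_upwards [h.ae_mem] with s hs
        have hAs : 0 < A i - B i * s := by linarith [hmul s hs]
        have hDs : D i - B i ≤ D i - B i * s := sub_le_sub_left (hmul s hs) _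
        rw [Real.norm_of_nonneg (mul_nonneg (rpow_nonneg (hBD.le.trans hDs) _)
          (rpow_nonneg hAs.le _))]
        exact mul_le_mul_of_nonneg_right (rpow_le_rpow_of_nonpos hBD hDs (neg_nonpos.2 hκ))
          (rpow_nonneg hAs.le _)
    _ ≤ (D i - B i) ^ (-κ) * (C * (A i ^ (-p) * (A i - B i) ^ (-(γ - p)))) := by
        rw [integral_const_mul]
        exact mul_le_mul_of_nonneg_left (hC _ _ hB hBA) (rpow_nonneg hBD.le _)
    _ = C * ‖(D i - B i) ^ (-κ) * A i ^ (-p) * (A i - B i) ^ (-(γ - p))‖ := by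
        rw [Real.norm_of_nonneg (mul_nonneg (by positivity)
          (rpow_nonneg (sub_nonneg.2 hBA.le) _))]
        ring

theorem isBigO_integral_rpow_mul_rpow_symm (h : HasTailGrowth μ p) (hκ : 0 ≤ κ) (hγ : 0 ≤ γ)
    (hB : ∀ᶠ i in l, 0 ≤ B i) (hBA : ∀ᶠ i in l, B i < A i) (hAD : ∀ᶠ i in l, A i ≤ D i) :
    (fun i ↦ (D i - B i) ^ (-κ) * A i ^ (-p) * (A i - B i) ^ (-(γ - p))) =O[l]
      fun i ↦ ∫ s, (D i - B i * s) ^ (-κ) * (A i - B i * s) ^ (-γ) ∂μ := by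
  obtain ⟨c, hc₀, hc⟩ := h.isTheta.isBigO_symm.exists_pos
  rw [IsBigOWith_def, eventually_principal] at hc
  refine .of_bound (c * 2 ^ (κ + γ)) ?_
  filter_upwards [hB, hBA, hAD] with i hB hBA hAD
  have hA : 0 < A i := hB.trans_lt hBA
  have hBD : 0 < D i - B i := by linarith
  have hsub : 0 < A i - B i := sub_pos.2 hBA
  have htail : ((A i - B i) / A i) ^ p ≤ c * μ.real (Ici (1 - (A i - B i) / A i)) := by
    have hle := hc _ ⟨div_pos hsub hA, (div_le_one hA).2 (sub_le_self _ hB)⟩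
    rwa [Real.norm_of_nonneg (by positivity), Real.norm_of_nonneg measureReal_nonneg] at hle
  calc ‖(D i - B i) ^ (-κ) * A i ^ (-p) * (A i - B i) ^ (-(γ - p))‖
      = 2 ^ (κ + γ) * ((2 * (D i - B i)) ^ (-κ) * (2 * (A i - B i)) ^ (-γ)) *
          ((A i - B i) / A i) ^ p := by
        have htwo : (2 : ℝ) ^ κ * 2 ^ γ * (2 ^ κ)⁻¹ * (2 ^ γ)⁻¹ = 1 := by field_simp
        rw [Real.norm_of_nonneg (by positivity), mul_rpow zero_le_two hBD.le,
          mul_rpow zero_le_two hsub.le, div_rpow hsub.le hA.le, neg_sub, sub_eq_add_neg p,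
          rpow_add hsub, rpow_add zero_lt_two, rpow_neg zero_le_two, rpow_neg zero_le_two,
          rpow_neg hA.le]
        linear_combination -((D i - B i) ^ (-κ) * (A i ^ p)⁻¹ * (A i - B i) ^ p *
          (A i - B i) ^ (-γ)) * htwo
    _ ≤ 2 ^ (κ + γ) * ((2 * (D i - B i)) ^ (-κ) * (2 * (A i - B i)) ^ (-γ)) *
          (c * μ.real (Ici (1 - (A i - B i) / A i))) := by gcongr
    _ = c * 2 ^ (κ + γ) * ((2 * (D i - B i)) ^ (-κ) * (2 * (A i - B i)) ^ (-γ) *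
          μ.real (Ici (1 - (A i - B i) / A i))) := by ring
    _ ≤ c * 2 ^ (κ + γ) * ‖∫ s, (D i - B i * s) ^ (-κ) * (A i - B i * s) ^ (-γ) ∂μ‖ := by
        gcongr
        exact (h.mul_measureReal_Ici_le_integral hκ hγ hB hBA hAD).trans (le_norm_self _)

theorem isTheta_integral_rpow_mul_rpow (h : HasTailGrowth μ p) (hκ : 0 ≤ κ) (hγ : p < γ)
    (hB : ∀ᶠ i in l, 0 ≤ B i) (hBA : ∀ᶠ i in l, B i < A i) (hAD : ∀ᶠ i in l, A i ≤ D i) :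
    (fun i ↦ ∫ s, (D i - B i * s) ^ (-κ) * (A i - B i * s) ^ (-γ) ∂μ) =Θ[l]
      fun i ↦ (D i - B i) ^ (-κ) * A i ^ (-p) * (A i - B i) ^ (-(γ - p)) :=
  ⟨h.isBigO_integral_rpow_mul_rpow hκ hγ hB hBA hAD,
    h.isBigO_integral_rpow_mul_rpow_symm hκ (h.exponent_nonneg.trans hγ.le) hB hBA hAD⟩

theorem isTheta_integral_rpow (h : HasTailGrowth μ p) (hγ : p < γ) (hB : ∀ᶠ i in l, 0 ≤ B i)
    (hBA : ∀ᶠ i in l, B i < A i) :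
    (fun i ↦ ∫ s, (A i - B i * s) ^ (-γ) ∂μ) =Θ[l]
      fun i ↦ A i ^ (-p) * (A i - B i) ^ (-(γ - p)) := by
  simpa only [neg_zero, rpow_zero, one_mul] using
    h.isTheta_integral_rpow_mul_rpow le_rfl hγ hB hBA (.of_forall fun _ ↦ le_rfl)

theorem isTheta_integral_integral_rpow (hμ : HasTailGrowth μ p) (hν : HasTailGrowth ν q)
    {z S Q : ι → ℝ} (hγ : p + q < γ) (hS : ∀ᶠ i in l, 0 ≤ S i) (hQ : ∀ᶠ i in l, 0 ≤ Q i)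
    (hz : ∀ᶠ i in l, S i + Q i < z i) :
    (fun i ↦ ∫ u, ∫ v, (z i - S i * u - Q i * v) ^ (-γ) ∂ν ∂μ) =Θ[l]
      fun i ↦ (z i - S i) ^ (-q) * (z i - Q i) ^ (-p) * (z i - Q i - S i) ^ (-(γ - q - p)) := by
  have := hν.toIsFiniteMeasure
  have hQ_lt : ∀ᶠ i in l, ∀ u ∈ Icc (-1 : ℝ) 1, Q i < z i - S i * u := by
    filter_upwards [hS, hz] with i hS hz u hu
    linarith [mul_le_of_le_one_right hS hu.2]
  have hinner : (fun x : ι × ℝ ↦ ∫ v, (z x.1 - S x.1 * x.2 - Q x.1 * v) ^ (-γ) ∂ν)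
      =Θ[l ×ˢ 𝓟 (Icc (-1) 1)] fun x ↦
        (z x.1 - S x.1 * x.2) ^ (-q) * (z x.1 - Q x.1 - S x.1 * x.2) ^ (-(γ - q)) := by
    simpa only [sub_right_comm] using hν.isTheta_integral_rpow
      (A := fun x : ι × ℝ ↦ z x.1 - S x.1 * x.2) (B := fun x ↦ Q x.1)
      (by linarith [hμ.exponent_nonneg]) (tendsto_fst.eventually hQ)
      (eventually_prod_principal_iff.2 hQ_lt)
  have hnonneg : ∀ᶠ i in l, ∀ u ∈ Icc (-1 : ℝ) 1,
      0 ≤ ∫ v, (z i - S i * u - Q i * v) ^ (-γ) ∂ν := by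
    filter_upwards [hQ, hQ_lt] with i hQ hQ_lt u hu
    refine integral_nonneg_of_ae ?_
    filter_upwards [hν.ae_mem] with v hv
    exact rpow_nonneg (by linarith [mul_le_of_le_one_right hQ hv.2, hQ_lt u hu]) _
  have hmeas : ∀ i, AEStronglyMeasurable (fun u ↦ ∫ v, (z i - S i * u - Q i * v) ^ (-γ) ∂ν) μ :=
    fun i ↦ (Measurable.stronglyMeasurable (f := fun x : ℝ × ℝ ↦
      (z i - S i * x.1 - Q i * x.2) ^ (-γ)) (by fun_prop)).integral_prod_right'.aestronglyMeasurable
  refine (isTheta_integral (.of_forall fun _ ↦ hμ.ae_mem) hnonneg ?_ (.of_forall hmeas) ?_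
    hinner).trans (hμ.isTheta_integral_rpow_mul_rpow hν.exponent_nonneg (by linarith) hS ?_ ?_)
  · filter_upwards [hQ, hQ_lt] with i hQ hQ_lt u hu
    exact mul_nonneg (rpow_nonneg (hQ.trans (hQ_lt u hu).le) _)
      (rpow_nonneg (by linarith [hQ_lt u hu]) _)
  · filter_upwards [hQ, hQ_lt] with i hQ hQ_lt
    refine hμ.integrable_of_continuousOn (ContinuousOn.mul ?_ ?_) <;>
      refine ContinuousOn.rpow_const (by fun_prop) fun u hu ↦ Or.inl ?_
    all_goals linarith [hQ_lt u hu]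
  · filter_upwards [hz] with i hz using by linarith
  · filter_upwards [hQ] with i hQ using sub_le_self _ hQ

end HasTailGrowth

theorem hasTailGrowth_zero_of_atom {μ : Measure ℝ} [IsFiniteMeasure μ]
    (hμ : ∀ᵐ s ∂μ, s ∈ Icc (-1) 1) (h₁ : μ {1} ≠ 0) : HasTailGrowth μ 0 where
  ae_mem := hμ
  isTheta := by
    have hpos : 0 < μ.real {1} := ENNReal.toReal_pos h₁ (measure_ne_top _ _)
    refine (isTheta_principal_iff_of_nonneg (fun _ _ ↦ measureReal_nonneg)
      fun r hr ↦ rpow_nonneg hr.1.le _).2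
        ⟨μ.real {1}, μ.real univ, hpos, hpos.trans_le (measureReal_mono (subset_univ _)),
          fun r hr ↦ ?_⟩
    rw [rpow_zero, mul_one, mul_one]
    exact ⟨measureReal_mono (singleton_subset_iff.2 (sub_le_self _ hr.1.le)),
      measureReal_mono (subset_univ _)⟩

theorem isTheta_setIntegral_Icc_of_isTheta_rpow {w : ℝ → ℝ} {q : ℝ} (hq : -1 < q)
    (hw₀ : ∀ s ∈ Icc 0 1, 0 ≤ w s) (hw : IntegrableOn w (Icc 0 1))
    (hwΘ : w =Θ[𝓟 (Icc 0 1)] fun s ↦ (1 - s) ^ q) :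
    (fun r ↦ ∫ s in Icc (1 - r) 1, w s) =Θ[𝓟 (Ioc 0 1)] fun r ↦ r ^ (q + 1) := by
  have hsubset : ∀ r ∈ Ioc (0 : ℝ) 1, Icc (1 - r) 1 ⊆ Icc 0 1 := fun r hr ↦
    Icc_subset_Icc_left (sub_nonneg.2 hr.2)
  have hint : ∀ r : ℝ, IntervalIntegrable (fun s : ℝ ↦ (1 - s) ^ q) volume (1 - r) 1 := fun r ↦ by
    simpa using (intervalIntegral.intervalIntegrable_rpow' (a := r) (b := 0) hq).comp_sub_left 1
  have hcompare : (fun r ↦ ∫ s in Icc (1 - r) 1, w s) =Θ[𝓟 (Ioc 0 1)]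
      fun r ↦ ∫ s in Icc (1 - r) 1, (1 - s) ^ q := by
    refine isTheta_integral (K := Icc 0 1) ?_ ?_ ?_ ?_ ?_ ?_
    · filter_upwards [mem_principal_self _] with r hr
      filter_upwards [ae_restrict_mem measurableSet_Icc] with s hs using hsubset r hr hs
    · exact .of_forall fun _ ↦ hw₀
    · exact .of_forall fun _ s hs ↦ rpow_nonneg (sub_nonneg.2 hs.2) _
    · filter_upwards [mem_principal_self _] with r hr
      exact (hw.mono_set (hsubset r hr)).aestronglyMeasurable
    · filter_upwards [mem_principal_self _] with r hr
      exact (intervalIntegrable_iff_integrableOn_Icc_of_le (sub_le_self _ hr.1.le)).1 (hint r)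
    · exact isTheta_comp_tendsto hwΘ tendsto_snd
  have hpower : (fun r : ℝ ↦ ∫ s in Icc (1 - r) 1, (1 - s) ^ q) =ᶠ[𝓟 (Ioc 0 1)]
      fun r ↦ (q + 1)⁻¹ * r ^ (q + 1) := by
    filter_upwards [mem_principal_self _] with r hr
    rw [integral_Icc_eq_integral_Ioc, ← intervalIntegral.integral_of_le (sub_le_self _ hr.1.le),
      intervalIntegral.integral_comp_sub_left (fun s ↦ s ^ q), sub_self, sub_sub_cancel,
      intervalIntegral.integral_of_le hr.1.le, setIntegral_Ioc_rpow hq hr.1.le,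
      div_eq_inv_mul]
  exact hcompare.trans (hpower.trans_isTheta
    ((isTheta_refl _ _).const_mul_left (inv_ne_zero (by linarith))))

theorem hasTailGrowth_withDensity {w : ℝ → ℝ} {q : ℝ} (hq : -1 < q)
    (hw₀ : ∀ s ∈ Icc (-1) 1, 0 ≤ w s) (hw : IntegrableOn w (Icc (-1) 1))
    (hwΘ : w =Θ[𝓟 (Icc 0 1)] fun s ↦ (1 - s) ^ q) :
    HasTailGrowth ((volume.restrict (Icc (-1) 1)).withDensity fun s ↦ ENNReal.ofReal (w s))
      (q + 1) where
  toIsFiniteMeasure := isFiniteMeasure_withDensity_ofReal hw.2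
  ae_mem := (withDensity_absolutelyContinuous _ _).ae_le (ae_restrict_mem measurableSet_Icc)
  isTheta := by
    have hsubset : Icc (0 : ℝ) 1 ⊆ Icc (-1) 1 := Icc_subset_Icc_left (by norm_num)
    refine EventuallyEq.trans_isTheta ?_ (isTheta_setIntegral_Icc_of_isTheta_rpow hq
      (fun s hs ↦ hw₀ s (hsubset hs)) (hw.mono_set hsubset) hwΘ)
    filter_upwards [mem_principal_self _] with r hr
    have hinter : Ici (1 - r) ∩ Icc (-1) 1 = Icc (1 - r) 1 := by
      rw [← Ici_inter_Iic, ← inter_assoc, Ici_inter_Ici, max_eq_left (by linarith [hr.2]),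
        Ici_inter_Iic]
    have hsub : Icc (1 - r) 1 ⊆ Icc (-1) 1 := hinter ▸ inter_subset_right
    rw [measureReal_def, withDensity_apply _ measurableSet_Ici,
      Measure.restrict_restrict measurableSet_Ici, hinter,
      ← ofReal_integral_eq_lintegral_ofReal (hw.mono_set hsub), ENNReal.toReal_ofReal]
    · exact setIntegral_nonneg measurableSet_Icc fun s hs ↦ hw₀ s (hsub hs)
    · filter_upwards [ae_restrict_mem measurableSet_Icc] with s hs using hw₀ s (hsub hs)

theorem one_sub_sq_rpow_eq {q s : ℝ} (hs : s ∈ Icc (-1) 1) :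
    (1 - s ^ 2) ^ q = (1 - s) ^ q * (1 + s) ^ q := by
  rw [← mul_rpow (sub_nonneg.2 hs.2) (neg_le_iff_add_nonneg'.1 hs.1)]
  ring_nf

theorem continuousOn_one_add_rpow (q : ℝ) : ContinuousOn (fun s : ℝ ↦ (1 + s) ^ q) (Icc 0 1) :=
  ContinuousOn.rpow_const (by fun_prop) fun s hs ↦ Or.inl (by linarith [hs.1])

theorem integrableOn_one_sub_sq_rpow {q : ℝ} (hq : -1 < q) :
    IntegrableOn (fun s : ℝ ↦ (1 - s ^ 2) ^ q) (Icc (-1) 1) := by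
  have hright : IntervalIntegrable (fun s : ℝ ↦ (1 - s ^ 2) ^ q) volume 0 1 := by
    have hfactor : IntervalIntegrable (fun s : ℝ ↦ (1 - s) ^ q * (1 + s) ^ q) volume 0 1 := by
      refine IntervalIntegrable.mul_continuousOn ?_ ?_
      · simpa using (intervalIntegral.intervalIntegrable_rpow' (a := 1) (b := 0) hq).comp_sub_left 1
      · simpa using continuousOn_one_add_rpow q
    refine hfactor.congr fun s hs ↦ (one_sub_sq_rpow_eq ?_).symm
    rw [uIoc_of_le zero_le_one] at hs
    exact ⟨by linarith [hs.1], hs.2⟩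
  have hleft : IntervalIntegrable (fun s : ℝ ↦ (1 - s ^ 2) ^ q) volume (-1) 0 := by
    simpa using (IntervalIntegrable.iff_comp_neg (by simp)).1 hright |>.symm
  exact (intervalIntegrable_iff_integrableOn_Icc_of_le (by norm_num)).1 (hleft.trans hright)

theorem isTheta_one_sub_sq_rpow (q : ℝ) :
    (fun s : ℝ ↦ (1 - s ^ 2) ^ q) =Θ[𝓟 (Icc 0 1)] fun s ↦ (1 - s) ^ q := by
  have hfactor : (fun s : ℝ ↦ (1 - s ^ 2) ^ q) =ᶠ[𝓟 (Icc 0 1)]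
      fun s ↦ (1 - s) ^ q * (1 + s) ^ q := by
    filter_upwards [mem_principal_self _] with s hs
    exact one_sub_sq_rpow_eq ⟨by linarith [hs.1], hs.2⟩
  have hone : (fun s : ℝ ↦ (1 + s) ^ q) =Θ[𝓟 (Icc 0 1)] fun _ ↦ (1 : ℝ) :=
    (continuousOn_one_add_rpow q).isTheta_principal isCompact_Icc
      (norm_ne_zero_iff.2 one_ne_zero) fun s hs ↦ (rpow_pos_of_pos (by linarith [hs.1]) q).ne'
  simpa only [mul_one] using hfactor.trans_isTheta ((isTheta_refl _ _).mul hone)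

theorem hasTailGrowth_jacobiPi {ν : ℝ} (hν : -1 / 2 ≤ ν) :
    HasTailGrowth (jacobiPi ν) (ν + 1 / 2) := by
  unfold jacobiPi
  split_ifs with h
  · rw [h, neg_div, neg_add_cancel]
    have : IsFiniteMeasure
        ((1 / 2 : ENNReal) • (Measure.dirac (-1) + Measure.dirac (1 : ℝ))) :=
      Measure.smul_finite _ (by norm_num)
    refine hasTailGrowth_zero_of_atom ?_ ?_
    · refine Measure.ae_smul_measure ?_ _
      simp [ae_add_measure_iff]
    · simp
  · have hν' : -1 / 2 < ν := lt_of_le_of_ne hν (Ne.symm h)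
    have hconst : 0 < Gamma (ν + 1) / (√π * Gamma (ν + 1 / 2)) :=
      div_pos (Gamma_pos_of_pos (by linarith))
        (mul_pos (sqrt_pos.2 pi_pos) (Gamma_pos_of_pos (by linarith)))
    have hq : -1 < ν - 1 / 2 := by linarith
    convert hasTailGrowth_withDensity
      (w := fun s ↦ Gamma (ν + 1) / (√π * Gamma (ν + 1 / 2)) * (1 - s ^ 2) ^ (ν - 1 / 2)) hq
      (fun s hs ↦ mul_nonneg hconst.le (rpow_nonneg ?_ _))
      ((integrableOn_one_sub_sq_rpow hq).const_mul _)
      ((isTheta_one_sub_sq_rpow _).const_mul_left hconst.ne') using 1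
    · ring
    · exact sub_nonneg.2 ((sq_le_one_iff_abs_le_one _).2 (abs_le.2 hs))

section Trigonometric

variable {ι : Type*} {l : Filter ι} {M : ℝ}

theorem isTheta_sinh {f : ι → ℝ} (hf : ∀ᶠ i in l, |f i| ≤ M) :
    (fun i ↦ sinh (f i)) =Θ[l] f := by
  have hΘ : sinh =Θ[𝓟 (Icc (-M) M)] fun x ↦ x := by
    simpa only [sub_zero] using isTheta_sub_of_simple_zero isCompact_Icc differentiable_sinh
      sinh_zero (by simp) fun x _ hx ↦ sinh_ne_zero.2 hx
  exact isTheta_comp_tendsto hΘ (tendsto_principal.2 (hf.mono fun _ ↦ abs_le.1))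

theorem isTheta_sin {f : ι → ℝ} (hM : M < π) (hf : ∀ᶠ i in l, |f i| ≤ M) :
    (fun i ↦ sin (f i)) =Θ[l] f := by
  have hΘ : sin =Θ[𝓟 (Icc (-M) M)] fun x ↦ x := by
    simpa only [sub_zero] using isTheta_sub_of_simple_zero isCompact_Icc differentiable_sin
      sin_zero (by simp) fun x hx hx₀ ↦ mt (sin_eq_zero_iff_of_lt_of_lt (by linarith [hx.1])
        (by linarith [hx.2])).1 hx₀
  exact isTheta_comp_tendsto hΘ (tendsto_principal.2 (hf.mono fun _ ↦ abs_le.1))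

theorem cosh_sub_cos_mul_cos (t x y : ℝ) :
    cosh (t / 2) - cos (x / 2) * cos (y / 2) =
      2 * sinh (t / 4) ^ 2 + (sin ((x + y) / 4) ^ 2 + sin ((x - y) / 4) ^ 2) := by
  have hcosh : cosh (t / 2) = 1 + 2 * sinh (t / 4) ^ 2 := by
    rw [show t / 2 = 2 * (t / 4) by ring, cosh_two_mul, cosh_sq]
    ring
  have hadd : cos (2 * ((x + y) / 4)) = cos (x / 2) * cos (y / 2) - sin (x / 2) * sin (y / 2) := by
    rw [← cos_add]
    ring_nf
  have hsub : cos (2 * ((x - y) / 4)) = cos (x / 2) * cos (y / 2) + sin (x / 2) * sin (y / 2) := by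
    rw [← cos_sub]
    ring_nf
  rw [hcosh, sin_sq_eq_half_sub, sin_sq_eq_half_sub, hadd, hsub]
  ring

theorem isTheta_cosh_sub_cos_mul_cos {t x y : ι → ℝ} (ht : ∀ᶠ i in l, |t i| ≤ M)
    (hx : ∀ᶠ i in l, |x i| ≤ π) (hy : ∀ᶠ i in l, |y i| ≤ π) :
    (fun i ↦ cosh (t i / 2) - cos (x i / 2) * cos (y i / 2)) =Θ[l]
      fun i ↦ t i ^ 2 + x i ^ 2 + y i ^ 2 := by
  have hsinh : (fun i ↦ sinh (t i / 4)) =Θ[l] fun i ↦ t i / 4 := by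
    refine isTheta_sinh (M := M) ?_
    filter_upwards [ht] with i ht
    rw [abs_div, abs_of_pos (zero_lt_four' ℝ)]
    exact (div_le_self (abs_nonneg _) (by norm_num)).trans ht
  have hadd : (fun i ↦ sin ((x i + y i) / 4)) =Θ[l] fun i ↦ (x i + y i) / 4 := by
    refine isTheta_sin (half_lt_self pi_pos) ?_
    filter_upwards [hx, hy] with i hx hy
    rw [abs_div, abs_of_pos (zero_lt_four' ℝ)]
    linarith [abs_add_le (x i) (y i)]
  have hsub : (fun i ↦ sin ((x i - y i) / 4)) =Θ[l] fun i ↦ (x i - y i) / 4 := by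
    refine isTheta_sin (half_lt_self pi_pos) ?_
    filter_upwards [hx, hy] with i hx hy
    rw [abs_div, abs_of_pos (zero_lt_four' ℝ)]
    linarith [abs_sub (x i) (y i)]
  have hsum : (fun i ↦ cosh (t i / 2) - cos (x i / 2) * cos (y i / 2)) =Θ[l]
      fun i ↦ 2 * (t i / 4) ^ 2 + (((x i + y i) / 4) ^ 2 + ((x i - y i) / 4) ^ 2) := by
    simp only [cosh_sub_cos_mul_cos]
    refine isTheta_add_of_nonneg ?_ ?_ ?_ ?_ ((isTheta_refl (fun _ ↦ (2 : ℝ)) l).mul (hsinh.pow 2))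
      (isTheta_add_of_nonneg ?_ ?_ ?_ ?_ (hadd.pow 2) (hsub.pow 2))
    all_goals exact .of_forall fun i ↦ by positivity
  have hsq : (fun i ↦ 2 * (t i / 4) ^ 2 + (((x i + y i) / 4) ^ 2 + ((x i - y i) / 4) ^ 2)) =
      fun i ↦ 8⁻¹ * (t i ^ 2 + x i ^ 2 + y i ^ 2) := by
    ext i
    ring
  rw [hsq] at hsum
  exact hsum.of_const_mul_right (by norm_num)

theorem isTheta_cosh_sub_cos_mul_cos_rpow {t x y : ι → ℝ} (ht : ∀ᶠ i in l, |t i| ≤ M)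
    (hx : ∀ᶠ i in l, |x i| ≤ π) (hy : ∀ᶠ i in l, |y i| ≤ π) (r : ℝ) :
    (fun i ↦ (cosh (t i / 2) - cos (x i / 2) * cos (y i / 2)) ^ r) =Θ[l]
      fun i ↦ (t i ^ 2 + x i ^ 2 + y i ^ 2) ^ r := by
  refine (isTheta_cosh_sub_cos_mul_cos ht hx hy).rpow (.of_forall fun i ↦ ?_)
    (.of_forall fun i ↦ ?_)
  · simp only [cosh_sub_cos_mul_cos]
    positivity
  · positivity

end Trigonometric

theorem muab_pos {a b : ℝ} (ha : -1 / 2 ≤ a) (hb : -1 / 2 ≤ b) : 0 < muab a b := by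
  rw [muab, integral_Icc_eq_integral_Ioc, ← intervalIntegral.integral_of_le pi_pos.le]
  refine intervalIntegral.intervalIntegral_pos_of_pos_on (Continuous.intervalIntegrable ?_ _ _)
    (fun x hx ↦ ?_) pi_pos
  · refine Continuous.mul ?_ ?_ <;>
      exact Continuous.rpow_const (by fun_prop) fun _ ↦ Or.inr (by linarith)
  · have hsin : 0 < sin (x / 2) :=
      sin_pos_of_pos_of_lt_pi (by linarith [hx.1]) (by linarith [hx.1, hx.2])
    have hcos : 0 < cos (x / 2) :=
      cos_pos_of_mem_Ioo ⟨by linarith [hx.1, pi_pos], by linarith [hx.2]⟩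
    positivity

theorem cab_pos {a b : ℝ} (ha : -1 / 2 ≤ a) (hb : -1 / 2 ≤ b) : 0 < cab a b :=
  div_pos (rpow_pos_of_pos two_pos _) (muab_pos ha hb)

theorem poissonJacobi_eq (a b t θ φ : ℝ) :
    poissonJacobi a b t θ φ = cab a b * sinh (t / 2) *
      ∫ u, ∫ v, (cosh (t / 2) - sin (θ / 2) * sin (φ / 2) * u -
        cos (θ / 2) * cos (φ / 2) * v) ^ (-(a + b + 2)) ∂jacobiPi b ∂jacobiPi a := by
  have hbase : ∀ u v, cosh (t / 2) - 1 + qfun θ φ u v =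
      cosh (t / 2) - sin (θ / 2) * sin (φ / 2) * u - cos (θ / 2) * cos (φ / 2) * v := fun u v ↦ by
    rw [qfun]
    ring
  simp only [poissonJacobi, hbase]

theorem qfun_nonneg {θ φ u v : ℝ} (hu : u ∈ Icc (-1) 1) (hv : v ∈ Icc (-1) 1) :
    0 ≤ qfun θ φ u v := by
  have hyoung : ∀ s ∈ Icc (-1 : ℝ) 1, ∀ x y : ℝ, s * x * y ≤ (x ^ 2 + y ^ 2) / 2 :=
    fun s hs x y ↦ by
      nlinarith [mul_nonneg (sub_nonneg.2 hs.2) (sq_nonneg (x + y)),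
        mul_nonneg (neg_le_iff_add_nonneg'.1 hs.1) (sq_nonneg (x - y))]
  rw [qfun]
  linarith [hyoung u hu (sin (θ / 2)) (sin (φ / 2)), hyoung v hv (cos (θ / 2)) (cos (φ / 2)),
    sin_sq_add_cos_sq (θ / 2), sin_sq_add_cos_sq (φ / 2)]

theorem poissonJacobi_nonneg {a b t : ℝ} (ha : -1 / 2 ≤ a) (hb : -1 / 2 ≤ b) (ht : 0 ≤ t)
    (θ φ : ℝ) : 0 ≤ poissonJacobi a b t θ φ := by
  refine mul_nonneg (mul_nonneg (cab_pos ha hb).le (sinh_nonneg_iff.2 (by linarith)))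
    (integral_nonneg_of_ae ?_)
  filter_upwards [(hasTailGrowth_jacobiPi ha).ae_mem] with u hu
  refine integral_nonneg_of_ae ?_
  filter_upwards [(hasTailGrowth_jacobiPi hb).ae_mem] with v hv
  exact rpow_nonneg (add_nonneg (sub_nonneg.2 (one_le_cosh _)) (qfun_nonneg hu hv)) _

section Kernel

variable {ι : Type*} {l : Filter ι} {a b T : ℝ} {t θ φ : ι → ℝ}

theorem isTheta_integral_jacobiPi (ha : -1 / 2 ≤ a) (hb : -1 / 2 ≤ b)
    (ht : ∀ᶠ i in l, 0 < t i) (hθ : ∀ᶠ i in l, θ i ∈ Icc 0 π) (hφ : ∀ᶠ i in l, φ i ∈ Icc 0 π) :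
    (fun i ↦ ∫ u, ∫ v, (cosh (t i / 2) - sin (θ i / 2) * sin (φ i / 2) * u -
        cos (θ i / 2) * cos (φ i / 2) * v) ^ (-(a + b + 2)) ∂jacobiPi b ∂jacobiPi a) =Θ[l]
      fun i ↦ (cosh (t i / 2) - sin (θ i / 2) * sin (φ i / 2)) ^ (-b - 1 / 2) *
        (cosh (t i / 2) - cos (θ i / 2) * cos (φ i / 2)) ^ (-a - 1 / 2) *
          (cosh (t i / 2) - cos ((θ i - φ i) / 2))⁻¹ := by
  have hdiff : ∀ i, cos (θ i / 2) * cos (φ i / 2) + sin (θ i / 2) * sin (φ i / 2) =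
      cos ((θ i - φ i) / 2) := fun i ↦ by rw [sub_div, cos_sub]
  have hexp : -(a + b + 2 - (b + 1 / 2) - (a + 1 / 2)) = -1 := by ring
  have key := (hasTailGrowth_jacobiPi ha).isTheta_integral_integral_rpow
    (hasTailGrowth_jacobiPi hb) (l := l) (z := fun i ↦ cosh (t i / 2))
    (S := fun i ↦ sin (θ i / 2) * sin (φ i / 2)) (Q := fun i ↦ cos (θ i / 2) * cos (φ i / 2))
    (γ := a + b + 2) (by linarith) ?_ ?_ ?_
  · simpa only [sub_sub _ (cos _ * cos _), hdiff, hexp, rpow_neg_one, neg_add'] using key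
  · filter_upwards [hθ, hφ] with i hθ hφ
    exact mul_nonneg
      (sin_nonneg_of_nonneg_of_le_pi (by linarith [hθ.1]) (by linarith [hθ.2, pi_pos]))
      (sin_nonneg_of_nonneg_of_le_pi (by linarith [hφ.1]) (by linarith [hφ.2, pi_pos]))
  · filter_upwards [hθ, hφ] with i hθ hφ
    exact mul_nonneg
      (cos_nonneg_of_mem_Icc ⟨by linarith [hθ.1, pi_pos], by linarith [hθ.2]⟩)
      (cos_nonneg_of_mem_Icc ⟨by linarith [hφ.1, pi_pos], by linarith [hφ.2]⟩)
  · filter_upwards [ht] with i ht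
    rw [add_comm, hdiff]
    exact (cos_le_one _).trans_lt (one_lt_cosh.2 (by linarith))

theorem isTheta_poissonJacobi (ha : -1 / 2 ≤ a) (hb : -1 / 2 ≤ b)
    (ht : ∀ᶠ i in l, t i ∈ Ioc 0 T) (hθ : ∀ᶠ i in l, θ i ∈ Icc 0 π)
    (hφ : ∀ᶠ i in l, φ i ∈ Icc 0 π) :
    (fun i ↦ poissonJacobi a b (t i) (θ i) (φ i)) =Θ[l] fun i ↦
      (t i ^ 2 + θ i ^ 2 + φ i ^ 2) ^ (-a - 1 / 2) *
        (t i ^ 2 + (π - θ i) ^ 2 + (π - φ i) ^ 2) ^ (-b - 1 / 2) *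
          (t i / (t i ^ 2 + (θ i - φ i) ^ 2)) := by
  have ht_abs : ∀ᶠ i in l, |t i| ≤ T := ht.mono fun i hi ↦ (abs_of_pos hi.1).trans_le hi.2
  have hθ_abs : ∀ᶠ i in l, |θ i| ≤ π := hθ.mono fun i hi ↦ (abs_of_nonneg hi.1).trans_le hi.2
  have hφ_abs : ∀ᶠ i in l, |φ i| ≤ π := hφ.mono fun i hi ↦ (abs_of_nonneg hi.1).trans_le hi.2
  have hprefactor : (fun i ↦ cab a b * sinh (t i / 2)) =Θ[l] t := by
    have hsinh : (fun i ↦ sinh (t i / 2)) =Θ[l] fun i ↦ t i / 2 := by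
      refine isTheta_sinh (M := T) ?_
      filter_upwards [ht] with i ht
      rw [abs_of_pos (half_pos ht.1)]
      exact (half_le_self ht.1.le).trans ht.2
    simp only [div_eq_inv_mul] at hsinh ⊢
    exact (hsinh.of_const_mul_right (by norm_num)).const_mul_left (cab_pos ha hb).ne'
  have hcos := isTheta_cosh_sub_cos_mul_cos_rpow ht_abs hθ_abs hφ_abs (-a - 1 / 2)
  have hsin : (fun i ↦ (cosh (t i / 2) - sin (θ i / 2) * sin (φ i / 2)) ^ (-b - 1 / 2)) =Θ[l]
      fun i ↦ (t i ^ 2 + (π - θ i) ^ 2 + (π - φ i) ^ 2) ^ (-b - 1 / 2) := by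
    simpa only [sub_div π, cos_pi_div_two_sub] using
      isTheta_cosh_sub_cos_mul_cos_rpow ht_abs (x := fun i ↦ π - θ i) (y := fun i ↦ π - φ i)
        (hθ.mono fun i hi ↦ abs_le.2 ⟨by linarith [hi.2, pi_pos], by linarith [hi.1]⟩)
        (hφ.mono fun i hi ↦ abs_le.2 ⟨by linarith [hi.2, pi_pos], by linarith [hi.1]⟩)
        (-b - 1 / 2)
  have hdiff : (fun i ↦ (cosh (t i / 2) - cos ((θ i - φ i) / 2))⁻¹) =Θ[l]
      fun i ↦ (t i ^ 2 + (θ i - φ i) ^ 2)⁻¹ := by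
    refine IsTheta.inv ?_
    simpa using isTheta_cosh_sub_cos_mul_cos (x := fun i ↦ θ i - φ i) (y := fun _ ↦ 0) ht_abs
      ((hθ.and hφ).mono fun i hi ↦ abs_sub_le_of_nonneg_of_le hi.1.1 hi.1.2 hi.2.1 hi.2.2)
      (.of_forall fun _ ↦ by simpa using pi_pos.le)
  have hintegral := isTheta_integral_jacobiPi ha hb (ht.mono fun _ ↦ And.left) hθ hφ
  simp only [poissonJacobi_eq]
  refine (hprefactor.mul (hintegral.trans ((hsin.mul hcos).mul hdiff))).trans_eventuallyEq
    (.of_forall fun i ↦ ?_)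
  simp only
  ring

end Kernel

/-- Theorem A.1 (short time part): for α, β ≥ -1/2 and 0 < t ≤ T, uniformly in θ, φ ∈ [0,π],
ℋ_t^{(α,β)}(θ,φ) ≃ (t²+θ²+φ²)^{-α-1/2}(t²+(π-θ)²+(π-φ)²)^{-β-1/2} t/(t²+(θ-φ)²). -/
theorem stmt18 (a b T : ℝ) (ha : -1/2 ≤ a) (hb : -1/2 ≤ b) (hT : 0 < T) :
    ∃ c C : ℝ, 0 < c ∧ 0 < C ∧ ∀ θ φ t : ℝ, θ ∈ Set.Icc 0 π → φ ∈ Set.Icc 0 π →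
      0 < t → t ≤ T →
      c * ((t ^ 2 + θ ^ 2 + φ ^ 2) ^ (-a - 1/2) *
            (t ^ 2 + (π - θ) ^ 2 + (π - φ) ^ 2) ^ (-b - 1/2) *
            (t / (t ^ 2 + (θ - φ) ^ 2))) ≤ poissonJacobi a b t θ φ ∧
      poissonJacobi a b t θ φ ≤
        C * ((t ^ 2 + θ ^ 2 + φ ^ 2) ^ (-a - 1/2) *
            (t ^ 2 + (π - θ) ^ 2 + (π - φ) ^ 2) ^ (-b - 1/2) *
            (t / (t ^ 2 + (θ - φ) ^ 2))) := by
  let region : Set (ℝ × ℝ × ℝ) := {x | x.1 ∈ Icc 0 π ∧ x.2.1 ∈ Icc 0 π ∧ x.2.2 ∈ Ioc 0 T}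
  have hΘ := isTheta_poissonJacobi (l := 𝓟 region) (t := fun x ↦ x.2.2) (θ := fun x ↦ x.1)
    (φ := fun x ↦ x.2.1) ha hb (fun _ hx ↦ hx.2.2) (fun _ hx ↦ hx.1) fun _ hx ↦ hx.2.1
  obtain ⟨c, C, hc, hC, hbounds⟩ := (isTheta_principal_iff_of_nonneg
    (fun x hx ↦ poissonJacobi_nonneg ha hb hx.2.2.1.le _ _)
    fun x hx ↦ by have := hx.2.2.1; positivity).1 hΘ
  exact ⟨c, C, hc, hC, fun θ φ t hθ hφ ht htT ↦ hbounds (θ, φ, t) ⟨hθ, hφ, ht, htT⟩⟩
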